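/- Let {A^k}_{k≥0} be a greedy HOOI sequence with a block-nondegenerate limit point Ā. Then there exist constants α > 0 and δ > 0 such that for every k, if ‖A^k − Ā‖_F ≤ δ then α‖A^{k+1} − A^k‖_F² ≤ f(A^{k+1}) − f(A^k). -/

import Mathlib

open Matrix BigOperators Filter

def froSq {ι κ : Type*} [Fintype ι] [Fintype κ] (M : Matrix ι κ ℝ) : ℝ :=
  ∑ i, ∑ j, (M i j) ^ 2

noncomputable def fro {ι κ : Type*} [Fintype ι] [Fintype κ] (M : Matrix ι κ ℝ) : ℝ :=
  Real.sqrt (froSq M)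

noncomputable def eigList {m : ℕ} {κ : Type*} [Fintype κ] (Y : Matrix (Fin m) κ ℝ) : List ℝ :=
  ((((Finset.univ : Finset (Fin m)).val.map
      (fun j => (Matrix.isHermitian_mul_conjTranspose_self Y).eigenvalues j)).sort (· ≤ ·)).reverse)

noncomputable def sval {m : ℕ} {κ : Type*} [Fintype κ] (Y : Matrix (Fin m) κ ℝ) (i : ℕ) : ℝ :=
  Real.sqrt ((eigList Y).getD (i - 1) 0)

/-- Feasibility: every factor matrix has orthonormal columns. -/
def TFeas {N : ℕ} {I r : Fin N → ℕ}
    (A : (n : Fin N) → Matrix (Fin (I n)) (Fin (r n)) ℝ) : Prop :=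
  ∀ n, (A n)ᵀ * A n = 1

/-- `Gₙ(A) = unfoldₙ(X ×₁ A₁ᵀ ⋯ ×_{n−1} A_{n−1}ᵀ ×_{n+1} A_{n+1}ᵀ ⋯ ×_N A_Nᵀ)`. -/
noncomputable def Gmat {N : ℕ} {I r : Fin N → ℕ} (X : ((n : Fin N) → Fin (I n)) → ℝ)
    (A : (n : Fin N) → Matrix (Fin (I n)) (Fin (r n)) ℝ) (n : Fin N) :
    Matrix (Fin (I n)) ((m : {m : Fin N // m ≠ n}) → Fin (r m.1)) ℝ :=
  fun j c => ∑ idx : ((m : {m : Fin N // m ≠ n}) → Fin (I m.1)),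
    X (fun i => if h : i = n then Fin.cast (by rw [h]) j else idx ⟨i, h⟩) *
      ∏ m : {m : Fin N // m ≠ n}, A m.1 (idx m) (c m)

/-- `f(A) = ‖X ×₁ A₁ᵀ ⋯ ×_N A_Nᵀ‖_F²`. -/
noncomputable def fval {N : ℕ} {I r : Fin N → ℕ} (X : ((n : Fin N) → Fin (I n)) → ℝ)
    (A : (n : Fin N) → Matrix (Fin (I n)) (Fin (r n)) ℝ) : ℝ :=
  ∑ c : ((n : Fin N) → Fin (r n)),
    (∑ idx : ((n : Fin N) → Fin (I n)), X idx * ∏ n, A n (idx n) (c n)) ^ 2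

/-- A critical point: `Gₙ(A)Gₙ(A)ᵀAₙ = AₙAₙᵀGₙ(A)Gₙ(A)ᵀAₙ` for all `n`. -/
def Critical {N : ℕ} {I r : Fin N → ℕ} (X : ((n : Fin N) → Fin (I n)) → ℝ)
    (A : (n : Fin N) → Matrix (Fin (I n)) (Fin (r n)) ℝ) : Prop :=
  ∀ n, Gmat X A n * (Gmat X A n)ᵀ * A n =
    A n * (A n)ᵀ * (Gmat X A n * (Gmat X A n)ᵀ * A n)

/-- A block-wise maximizer. -/
def BlockMax {N : ℕ} {I r : Fin N → ℕ} (X : ((n : Fin N) → Fin (I n)) → ℝ)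
    (A : (n : Fin N) → Matrix (Fin (I n)) (Fin (r n)) ℝ) : Prop :=
  ∀ n, ∀ B : Matrix (Fin (I n)) (Fin (r n)) ℝ, Bᵀ * B = 1 →
    froSq (Bᵀ * Gmat X A n) ≤ froSq ((A n)ᵀ * Gmat X A n)

/-- Block-nondegeneracy: `σ_{rₙ}(Gₙ(A)) > σ_{rₙ+1}(Gₙ(A))` for all `n`. -/
def NonDeg {N : ℕ} {I r : Fin N → ℕ} (X : ((n : Fin N) → Fin (I n)) → ℝ)
    (A : (n : Fin N) → Matrix (Fin (I n)) (Fin (r n)) ℝ) : Prop :=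
  ∀ n, sval (Gmat X A n) (r n + 1) < sval (Gmat X A n) (r n)

/-- The hybrid tuple used in HOOI: the already-updated blocks `i < n` come from
`Anew`, the rest from `Aold`. -/
def hyb {N : ℕ} {I r : Fin N → ℕ}
    (Aold Anew : (n : Fin N) → Matrix (Fin (I n)) (Fin (r n)) ℝ) (n : Fin N) :
    (i : Fin N) → Matrix (Fin (I i)) (Fin (r i)) ℝ :=
  fun i => if i < n then Anew i else Aold i

/-- `Gₙ^k = unfoldₙ(X ×₁ (A₁^{k+1})ᵀ ⋯ ×_{n−1} (A_{n−1}^{k+1})ᵀ ×_{n+1} (A_{n+1}^k)ᵀ ⋯ ×_N (A_N^k)ᵀ)`. -/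
noncomputable def Gseq {N : ℕ} {I r : Fin N → ℕ} (X : ((n : Fin N) → Fin (I n)) → ℝ)
    (A : ℕ → (n : Fin N) → Matrix (Fin (I n)) (Fin (r n)) ℝ) (k : ℕ) (n : Fin N) :
    Matrix (Fin (I n)) ((m : {m : Fin N // m ≠ n}) → Fin (r m.1)) ℝ :=
  Gmat X (hyb (A k) (A (k + 1)) n) n

/-- A HOOI sequence. -/
def IsHOOI {N : ℕ} {I r : Fin N → ℕ} (X : ((n : Fin N) → Fin (I n)) → ℝ)
    (A : ℕ → (n : Fin N) → Matrix (Fin (I n)) (Fin (r n)) ℝ) : Prop :=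
  (∀ k, TFeas (A k)) ∧
  ∀ k (n : Fin N), ∀ B : Matrix (Fin (I n)) (Fin (r n)) ℝ, Bᵀ * B = 1 →
    froSq (Bᵀ * Gseq X A k n) ≤ froSq ((A (k + 1) n)ᵀ * Gseq X A k n)

/-- A greedy HOOI sequence. -/
def IsGreedyHOOI {N : ℕ} {I r : Fin N → ℕ} (X : ((n : Fin N) → Fin (I n)) → ℝ)
    (A : ℕ → (n : Fin N) → Matrix (Fin (I n)) (Fin (r n)) ℝ) : Prop :=
  IsHOOI X A ∧
  ∀ k (n : Fin N), ∀ B : Matrix (Fin (I n)) (Fin (r n)) ℝ, Bᵀ * B = 1 →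
    (∀ C : Matrix (Fin (I n)) (Fin (r n)) ℝ, Cᵀ * C = 1 →
      froSq (Cᵀ * Gseq X A k n) ≤ froSq (Bᵀ * Gseq X A k n)) →
    fro (A (k + 1) n - A k n) ≤ fro (B - A k n)

/-- `Ā` is a limit point of the sequence `{A^k}` (blockwise in Frobenius norm). -/
def IsLimitPt {N : ℕ} {I r : Fin N → ℕ}
    (A : ℕ → (n : Fin N) → Matrix (Fin (I n)) (Fin (r n)) ℝ)
    (Abar : (n : Fin N) → Matrix (Fin (I n)) (Fin (r n)) ℝ) : Prop :=
  ∃ φ : ℕ → ℕ, StrictMono φ ∧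
    ∀ n, Tendsto (fun k => fro (A (φ k) n - Abar n)) atTop (nhds 0)

/-- `‖A − B‖_F = √(∑ₙ ‖Aₙ − Bₙ‖_F²)` on tuples. -/
noncomputable def tdist {N : ℕ} {I r : Fin N → ℕ}
    (A B : (n : Fin N) → Matrix (Fin (I n)) (Fin (r n)) ℝ) : ℝ :=
  Real.sqrt (∑ n, froSq (A n - B n))

/-- A local maximizer of `f` over the feasible set. -/
def LocalMax {N : ℕ} {I r : Fin N → ℕ} (X : ((n : Fin N) → Fin (I n)) → ℝ)
    (A : (n : Fin N) → Matrix (Fin (I n)) (Fin (r n)) ℝ) : Prop :=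
  TFeas A ∧ ∃ ε > (0 : ℝ), ∀ B : (n : Fin N) → Matrix (Fin (I n)) (Fin (r n)) ℝ,
    TFeas B → tdist B A ≤ ε → fval X B ≤ fval X A

/-- A globally optimal solution. -/
def GlobalMax {N : ℕ} {I r : Fin N → ℕ} (X : ((n : Fin N) → Fin (I n)) → ℝ)
    (A : (n : Fin N) → Matrix (Fin (I n)) (Fin (r n)) ℝ) : Prop :=
  TFeas A ∧ ∀ B : (n : Fin N) → Matrix (Fin (I n)) (Fin (r n)) ℝ,
    TFeas B → fval X B ≤ fval X A

lemma froSq_eq_trace {ι κ : Type*} [Fintype ι] [Fintype κ] (M : Matrix ι κ ℝ) :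
    froSq M = trace (Mᵀ * M) := by
  unfold froSq
  rw [Finset.sum_comm]
  simp [trace, Matrix.mul_apply, pow_two]

lemma froSq_nonneg {ι κ : Type*} [Fintype ι] [Fintype κ] (M : Matrix ι κ ℝ) :
    0 ≤ froSq M := by
  unfold froSq; positivity

lemma spectral_sorted {m : ℕ} {κ : Type*} [Fintype κ] (Y : Matrix (Fin m) κ ℝ) :
    ∃ (W : Matrix (Fin m) (Fin m) ℝ) (l : Fin m → ℝ), Wᵀ * W = 1 ∧ W * Wᵀ = 1 ∧ Antitone l ∧
      Y * Yᵀ = W * diagonal l * Wᵀ ∧ ∀ i : Fin m, (eigList Y).getD i 0 = l i := by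
  set hH := Matrix.isHermitian_mul_conjTranspose_self Y with hHdef
  set ev := hH.eigenvalues with hev
  let e : Equiv.Perm (Fin m) := Tuple.sort (fun i => - ev i)
  have hanti : Antitone (ev ∘ e) := by
    have := Tuple.monotone_sort (fun i => - ev i)
    intro a b hab
    have h := this hab
    simp only [Function.comp] at h ⊢
    exact neg_le_neg_iff.mp h
  have hU1 : (hH.eigenvectorUnitary : Matrix (Fin m) (Fin m) ℝ)ᵀ * hH.eigenvectorUnitary = 1 := by
    have := Unitary.coe_star_mul_self hH.eigenvectorUnitary
    rwa [star_eq_conjTranspose, conjTranspose_eq_transpose_of_trivial] at this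
  set U : Matrix (Fin m) (Fin m) ℝ := (hH.eigenvectorUnitary : Matrix (Fin m) (Fin m) ℝ) with hU
  have hU2 : U * Uᵀ = 1 := mul_eq_one_comm.mp hU1
  have hsp : Y * Yᵀ = U * diagonal ev * Uᵀ := by
    have := hH.spectral_theorem
    rw [Unitary.conjStarAlgAut_apply] at this
    have h2 : Yᴴ = Yᵀ := conjTranspose_eq_transpose_of_trivial Y
    calc Y * Yᵀ = Y * Yᴴ := by rw [h2]
      _ = _ := this
      _ = U * diagonal ev * Uᵀ := by
        simp only [star_eq_conjTranspose, conjTranspose_eq_transpose_of_trivial]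
        rfl
  refine ⟨U.submatrix id e, ev ∘ e, ?_, ?_, hanti, ?_, ?_⟩
  · rw [transpose_submatrix, ← submatrix_mul _ _ _ _ _ Function.bijective_id, hU1]
    simp
  · rw [transpose_submatrix, ← submatrix_mul _ _ _ _ _ e.bijective, hU2]
    simp
  · rw [hsp, transpose_submatrix]
    have : diagonal (ev ∘ e) = (diagonal ev).submatrix e e := by
      simp
    rw [this, ← submatrix_mul _ _ _ _ _ e.bijective, ← submatrix_mul _ _ _ _ _ e.bijective]
    simp
  · have hlist : eigList Y = List.ofFn (ev ∘ e) := by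
      have hs1 : (eigList Y).SortedGE := by
        unfold eigList
        have := (Multiset.pairwise_sort ((Finset.univ : Finset (Fin m)).val.map
          (fun j => (Matrix.isHermitian_mul_conjTranspose_self Y).eigenvalues j)) (· ≤ ·))
        rw [List.sortedGE_reverse]
        exact this.sortedLE
      have hs2 : (List.ofFn (ev ∘ e)).SortedGE := hanti.sortedGE_ofFn
      refine List.Perm.eq_of_sortedGE hs1 hs2 ?_
      unfold eigList
      refine (List.reverse_perm _).trans ?_
      rw [← Multiset.coe_eq_coe, Multiset.sort_eq]
      rw [Fin.univ_val_map, Multiset.coe_eq_coe]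
      exact (Equiv.Perm.ofFn_comp_perm e ev).symm
    intro i
    rw [hlist]
    simp [List.getD]

/-- rows of a matrix with orthonormal columns have norm at most one -/
lemma row_le_one {m s : ℕ} (Z : Matrix (Fin m) (Fin s) ℝ) (hZ : Zᵀ * Z = 1) (j : Fin m) :
    ∑ c, (Z j c) ^ 2 ≤ 1 := by
  set P := Z * Zᵀ with hP
  have hPP : P * P = P := by
    rw [hP, Matrix.mul_assoc, ← Matrix.mul_assoc Zᵀ, hZ, Matrix.one_mul]
  have hPt : Pᵀ = P := by simp [hP]
  have h1 : P j j = ∑ c, (Z j c) ^ 2 := by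
    simp [hP, Matrix.mul_apply, pow_two]
  have h2 : P j j = ∑ k, (P j k) ^ 2 := by
    conv_lhs => rw [← hPP]
    rw [Matrix.mul_apply]
    refine Finset.sum_congr rfl fun k _ => ?_
    have : P k j = P j k := congrFun (congrFun hPt j) k
    rw [this, pow_two]
  have h3 : (P j j) ^ 2 ≤ P j j := by
    conv_rhs => rw [h2]
    exact Finset.single_le_sum (f := fun k => (P j k) ^ 2) (fun k _ => sq_nonneg _)
      (Finset.mem_univ j)
  rw [← h1]
  nlinarith

lemma sum_rows {m s : ℕ} (Z : Matrix (Fin m) (Fin s) ℝ) (hZ : Zᵀ * Z = 1) :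
    ∑ j, ∑ c, (Z j c) ^ 2 = s := by
  have := froSq_eq_trace Z
  rw [hZ] at this
  simpa [froSq] using this

lemma sum_ite_lt {m s : ℕ} (h : s ≤ m) (F : Fin m → ℝ) :
    ∑ j : Fin m, (if j.val < s then F j else 0) = ∑ i : Fin s, F (Fin.castLE h i) := by
  obtain ⟨t, rfl⟩ := Nat.exists_eq_add_of_le h
  rw [Fin.sum_univ_add]
  simp
  rfl

lemma froSq_diag {m s : ℕ} {κ : Type*} [Fintype κ] (Y : Matrix (Fin m) κ ℝ)
    (W : Matrix (Fin m) (Fin m) ℝ) (l : Fin m → ℝ) (hY : Y * Yᵀ = W * diagonal l * Wᵀ)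
    (C : Matrix (Fin m) (Fin s) ℝ) :
    froSq (Cᵀ * Y) = ∑ j, l j * ∑ c, ((Wᵀ * C) j c) ^ 2 := by
  rw [froSq_eq_trace, trace_mul_comm]
  have : Cᵀ * Y * (Cᵀ * Y)ᵀ = (Wᵀ * C)ᵀ * (diagonal l * (Wᵀ * C)) := by
    simp only [transpose_mul, transpose_transpose]
    calc Cᵀ * Y * (Yᵀ * C) = Cᵀ * (Y * Yᵀ) * C := by simp only [Matrix.mul_assoc]
      _ = _ := by rw [hY]; simp only [Matrix.mul_assoc]
  rw [this]
  generalize Wᵀ * C = Z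
  simp only [trace, Matrix.mul_apply (M := Zᵀ), diag_apply, diagonal_mul, transpose_apply]
  rw [Finset.sum_comm]
  refine Finset.sum_congr rfl fun j _ => ?_
  rw [Finset.mul_sum]
  refine Finset.sum_congr rfl fun c _ => ?_
  ring

/-- Ky Fan with gap. -/
lemma kyfan {m s : ℕ} {κ : Type*} [Fintype κ] (hs : s ≤ m) (Y : Matrix (Fin m) κ ℝ)
    (W : Matrix (Fin m) (Fin m) ℝ) (l : Fin m → ℝ) (hW : W * Wᵀ = 1)
    (hY : Y * Yᵀ = W * diagonal l * Wᵀ) (g μ : ℝ)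
    (h1 : ∀ j : Fin m, j.val < s → μ + g ≤ l j) (h2 : ∀ j : Fin m, s ≤ j.val → l j ≤ μ)
    (C : Matrix (Fin m) (Fin s) ℝ) (hC : Cᵀ * C = 1) :
    froSq (Cᵀ * Y) + g * (s - froSq ((W.submatrix id (Fin.castLE hs))ᵀ * C)) ≤
      ∑ i : Fin s, l (Fin.castLE hs i) := by
  rw [froSq_diag Y W l hY]
  set Z := Wᵀ * C with hZdef
  have hZ : Zᵀ * Z = 1 := by
    rw [hZdef, transpose_mul, transpose_transpose, Matrix.mul_assoc, ← Matrix.mul_assoc W, hW,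
      Matrix.one_mul, hC]
  set w : Fin m → ℝ := fun j => ∑ c, (Z j c) ^ 2 with hw
  have hw0 : ∀ j, 0 ≤ w j := fun j => by simp only [hw]; positivity
  have hw1 : ∀ j, w j ≤ 1 := row_le_one Z hZ
  have hws : ∑ j, w j = s := sum_rows Z hZ
  have hU : froSq ((W.submatrix id (Fin.castLE hs))ᵀ * C) = ∑ i : Fin s, w (Fin.castLE hs i) := by
    simp only [froSq, hw, hZdef]
    rfl
  rw [hU, ← sum_ite_lt hs w, ← sum_ite_lt hs l]
  have hcard : ∑ j : Fin m, (if j.val < s then (1:ℝ) else 0) = s := by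
    rw [sum_ite_lt hs (fun _ => (1:ℝ))]; simp
  have key : ∀ j : Fin m, ((if j.val < s then (1:ℝ) else 0) - w j) * μ
      + g * ((if j.val < s then (1:ℝ) else 0) - (if j.val < s then w j else 0))
      ≤ (if j.val < s then l j else 0) - l j * w j := by
    intro j
    by_cases hj : j.val < s
    · simp only [hj, if_true]
      nlinarith [mul_nonneg (sub_nonneg.mpr (hw1 j)) (sub_nonneg.mpr (h1 j hj))]
    · simp only [hj, if_false]
      nlinarith [mul_nonneg (hw0 j) (sub_nonneg.mpr (h2 j (not_lt.mp hj)))]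
  have := Finset.sum_le_sum (fun j (_ : j ∈ Finset.univ) => key j)
  rw [Finset.sum_add_distrib, ← Finset.sum_mul, ← Finset.mul_sum, Finset.sum_sub_distrib,
    Finset.sum_sub_distrib, Finset.sum_sub_distrib, hcard, hws] at this
  linarith

/-- top eigenvectors are feasible and attain the Ky Fan value -/
lemma top_orth {m s : ℕ} (hs : s ≤ m) (W : Matrix (Fin m) (Fin m) ℝ) (hW : Wᵀ * W = 1) :
    (W.submatrix id (Fin.castLE hs))ᵀ * (W.submatrix id (Fin.castLE hs)) = 1 := by
  rw [transpose_submatrix, ← submatrix_mul _ _ _ _ _ Function.bijective_id, hW]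
  ext i j
  simp [Matrix.one_apply]

lemma top_val {m s : ℕ} {κ : Type*} [Fintype κ] (hs : s ≤ m) (Y : Matrix (Fin m) κ ℝ)
    (W : Matrix (Fin m) (Fin m) ℝ) (l : Fin m → ℝ) (hW : Wᵀ * W = 1)
    (hY : Y * Yᵀ = W * diagonal l * Wᵀ) :
    froSq ((W.submatrix id (Fin.castLE hs))ᵀ * Y) = ∑ i : Fin s, l (Fin.castLE hs i) := by
  rw [froSq_diag Y W l hY]
  have : Wᵀ * W.submatrix id (Fin.castLE hs) = (1 : Matrix _ _ ℝ).submatrix id (Fin.castLE hs) := by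
    rw [← hW]; rfl
  rw [this, ← sum_ite_lt hs l]
  refine Finset.sum_congr rfl fun j _ => ?_
  by_cases hj : j.val < s
  · rw [if_pos hj, Finset.sum_eq_single (⟨j.val, hj⟩ : Fin s)]
    · simp [Matrix.one_apply]
    · intro c _ hc
      simp only [submatrix_apply, id, Matrix.one_apply]
      rw [if_neg]; simp
      intro h; apply hc; ext; simp [h]
    · simp
  · rw [if_neg hj, Finset.sum_eq_zero, mul_zero]
    intro c _
    simp only [submatrix_apply, id, Matrix.one_apply]
    rw [if_neg]; simp
    intro h; apply hj; rw [h]; simp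

lemma polar {r : ℕ} (K : Matrix (Fin r) (Fin r) ℝ)
    (hK : ∀ W : Matrix (Fin r) (Fin r) ℝ, Wᵀ * W = 1 → ∀ j, ((K * W)ᵀ * (K * W)) j j ≤ 1) :
    ∃ O : Matrix (Fin r) (Fin r) ℝ, Oᵀ * O = 1 ∧ froSq K ≤ trace (Oᵀ * K) := by
  obtain ⟨W, l, hW1, hW2, -, hsp, -⟩ := spectral_sorted Kᵀ
  rw [transpose_transpose] at hsp
  have hKW : (K * W)ᵀ * (K * W) = diagonal l := by
    calc (K * W)ᵀ * (K * W) = Wᵀ * (Kᵀ * K) * W := by simp only [transpose_mul, Matrix.mul_assoc]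
      _ = (Wᵀ * W) * diagonal l * (Wᵀ * W) := by rw [hsp]; simp only [Matrix.mul_assoc]
      _ = diagonal l := by rw [hW1]; simp
  have hl1 : ∀ j, l j ≤ 1 := fun j => by
    have := hK W hW1 j
    rw [hKW] at this
    simpa using this
  set D := K * W with hD
  have hdot : ∀ i j, ∑ k, D k i * D k j = if i = j then l i else 0 := by
    intro i j
    have := congrFun (congrFun hKW i) j
    rw [Matrix.mul_apply, diagonal_apply] at this
    simpa using this
  have hl0 : ∀ j, 0 ≤ l j := fun j => by
    have := hdot j j
    rw [if_pos rfl] at this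
    rw [← this]
    exact Finset.sum_nonneg fun k _ => mul_self_nonneg _
  let v : Fin r → EuclideanSpace ℝ (Fin r) := fun j => WithLp.toLp 2 fun i => D i j / Real.sqrt (l j)
  let S : Set (Fin r) := {j | l j ≠ 0}
  have hv : Orthonormal ℝ (S.domRestrict v) := by
    rw [orthonormal_iff_ite]
    rintro ⟨i, hi⟩ ⟨j, hj⟩
    have h1 : inner ℝ (v i) (v j) = (∑ k, D k i * D k j) / (Real.sqrt (l i) * Real.sqrt (l j)) := by
      simp only [v, PiLp.inner_apply, Finset.sum_div]
      refine Finset.sum_congr rfl fun k _ => ?_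
      simp
      ring
    simp only [Set.domRestrict_apply, Subtype.mk.injEq]
    rw [h1, hdot]
    by_cases hij : i = j
    · subst hij
      simp only [if_true]
      rw [Real.mul_self_sqrt (hl0 i)]
      exact div_self hi
    · simp [hij]
  obtain ⟨b, hb⟩ := hv.exists_orthonormalBasis_extension_of_card_eq (by simp)
  let Q : Matrix (Fin r) (Fin r) ℝ := fun i j => b j i
  have hQ : Qᵀ * Q = 1 := by
    ext i j
    have := (orthonormal_iff_ite.mp b.orthonormal) i j
    rw [Matrix.mul_apply, Matrix.one_apply, ← this, PiLp.inner_apply]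
    refine Finset.sum_congr rfl fun k _ => ?_
    change b i k * b j k = _
    simp [mul_comm]
  have hDQ : D = Q * diagonal (fun j => Real.sqrt (l j)) := by
    ext i j
    rw [mul_diagonal]
    by_cases hj : l j = 0
    · have h1 := hdot j j
      rw [if_pos rfl, hj, Finset.sum_eq_zero_iff_of_nonneg (fun k _ => mul_self_nonneg _)] at h1
      rw [hj, mul_self_eq_zero.mp (h1 i (Finset.mem_univ i))]
      simp
    · have h1 : Q i j = D i j / Real.sqrt (l j) := by
        simp only [Q]
        rw [hb j hj]
      rw [h1]
      have : Real.sqrt (l j) ≠ 0 := (Real.sqrt_ne_zero (hl0 j)).mpr hj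
      field_simp
  refine ⟨Q * Wᵀ, ?_, ?_⟩
  · rw [transpose_mul, transpose_transpose, Matrix.mul_assoc, ← Matrix.mul_assoc Qᵀ, hQ,
      Matrix.one_mul, hW2]
  · have h1 : froSq K = ∑ j, l j := by
      rw [froSq_eq_trace, hsp, trace_mul_comm, ← Matrix.mul_assoc, hW1, Matrix.one_mul,
        trace_diagonal]
    have h2 : trace ((Q * Wᵀ)ᵀ * K) = ∑ j, Real.sqrt (l j) := by
      rw [transpose_mul, transpose_transpose, Matrix.mul_assoc, trace_mul_comm, Matrix.mul_assoc,
        ← hD, hDQ, ← Matrix.mul_assoc, hQ, Matrix.one_mul, trace_diagonal]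
    rw [h1, h2]
    refine Finset.sum_le_sum fun j _ => ?_
    exact Real.le_sqrt_of_sq_le (by nlinarith [hl0 j, hl1 j])

lemma froSq_mul_left_orth {s : ℕ} {κ : Type*} [Fintype κ] (O : Matrix (Fin s) (Fin s) ℝ)
    (hO : Oᵀ * O = 1) (M : Matrix (Fin s) κ ℝ) : froSq (Oᵀ * M) = froSq M := by
  have hO2 : O * Oᵀ = 1 := mul_eq_one_comm.mp hO
  rw [froSq_eq_trace, froSq_eq_trace, transpose_mul, transpose_transpose, Matrix.mul_assoc,
    ← Matrix.mul_assoc O, hO2, Matrix.one_mul]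

/-- nearest orthonormal frame with the same span -/
lemma nearest {m s : ℕ} (U C : Matrix (Fin m) (Fin s) ℝ) (hU : Uᵀ * U = 1) (hC : Cᵀ * C = 1) :
    ∃ O : Matrix (Fin s) (Fin s) ℝ, Oᵀ * O = 1 ∧
      froSq (U * O - C) ≤ 2 * (s - froSq (Uᵀ * C)) := by
  obtain ⟨O, hO, hle⟩ := polar (Uᵀ * C) (by
    intro W hW j
    set Z := C * W with hZd
    have hZ : Zᵀ * Z = 1 := by
      rw [hZd, transpose_mul, Matrix.mul_assoc, ← Matrix.mul_assoc Cᵀ, hC, Matrix.one_mul, hW]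
    have h1 : Uᵀ * C * W = Uᵀ * Z := by rw [Matrix.mul_assoc]
    rw [h1]
    have h2 : (Z - U * (Uᵀ * Z))ᵀ * (Z - U * (Uᵀ * Z)) = 1 - (Uᵀ * Z)ᵀ * (Uᵀ * Z) := by
      have e1 : Zᵀ * (U * (Uᵀ * Z)) = (Uᵀ * Z)ᵀ * (Uᵀ * Z) := by
        simp only [transpose_mul, transpose_transpose, Matrix.mul_assoc]
      have e2 : (U * (Uᵀ * Z))ᵀ * Z = (Uᵀ * Z)ᵀ * (Uᵀ * Z) := by
        rw [transpose_mul, Matrix.mul_assoc]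
      have e3 : (U * (Uᵀ * Z))ᵀ * (U * (Uᵀ * Z)) = (Uᵀ * Z)ᵀ * (Uᵀ * Z) := by
        rw [transpose_mul, Matrix.mul_assoc, ← Matrix.mul_assoc Uᵀ U, hU, Matrix.one_mul]
      rw [transpose_sub, Matrix.sub_mul, Matrix.mul_sub, Matrix.mul_sub, hZ, e1, e2, e3]
      simp
    have h3 : 0 ≤ ((Z - U * (Uᵀ * Z))ᵀ * (Z - U * (Uᵀ * Z))) j j := by
      rw [Matrix.mul_apply]
      exact Finset.sum_nonneg fun k _ => mul_self_nonneg _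
    rw [h2] at h3
    simpa using h3)
  refine ⟨O, hO, ?_⟩
  have h : (U * O - C)ᵀ * (U * O - C) = 1 + 1 - Oᵀ * (Uᵀ * C) - (Oᵀ * (Uᵀ * C))ᵀ := by
    have e1 : (U * O)ᵀ * (U * O) = 1 := by
      rw [transpose_mul, Matrix.mul_assoc, ← Matrix.mul_assoc Uᵀ, hU, Matrix.one_mul, hO]
    have e2 : (U * O)ᵀ * C = Oᵀ * (Uᵀ * C) := by rw [transpose_mul, Matrix.mul_assoc]
    have e3 : Cᵀ * (U * O) = (Oᵀ * (Uᵀ * C))ᵀ := by rw [← e2]; simp [transpose_mul]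
    rw [transpose_sub, Matrix.sub_mul, Matrix.mul_sub, Matrix.mul_sub, hC, e1, e2, e3]
    abel
  rw [froSq_eq_trace (U * O - C), h]
  simp only [trace_sub, trace_add, trace_transpose, trace_one, Fintype.card_fin]
  linarith

noncomputable def lam {m : ℕ} {κ : Type*} [Fintype κ] (Y : Matrix (Fin m) κ ℝ) (i : ℕ) : ℝ :=
  (eigList Y).getD i 0

/-- the one-block inequality -/
lemma block_step {m s : ℕ} {κ : Type*} [Fintype κ] (hs : s ≤ m) (hs0 : 0 < s)
    (Y : Matrix (Fin m) κ ℝ) (g : ℝ) (hg : 0 < g) (hgap : s < m → g ≤ lam Y (s - 1) - lam Y s)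
    (B C : Matrix (Fin m) (Fin s) ℝ) (hC : Cᵀ * C = 1)
    (hmax : ∀ B' : Matrix (Fin m) (Fin s) ℝ, B'ᵀ * B' = 1 → froSq (B'ᵀ * Y) ≤ froSq (Bᵀ * Y))
    (hgr : ∀ B' : Matrix (Fin m) (Fin s) ℝ, B'ᵀ * B' = 1 →
      (∀ C' : Matrix (Fin m) (Fin s) ℝ, C'ᵀ * C' = 1 → froSq (C'ᵀ * Y) ≤ froSq (B'ᵀ * Y)) →
      fro (B - C) ≤ fro (B' - C)) :
    g / 2 * froSq (B - C) ≤ froSq (Bᵀ * Y) - froSq (Cᵀ * Y) := by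
  obtain ⟨W, l, hW1, hW2, hanti, hsp, hl⟩ := spectral_sorted Y
  set U := W.submatrix id (Fin.castLE hs) with hUdef
  have hU : Uᵀ * U = 1 := top_orth hs W hW1
  have hUv : froSq (Uᵀ * Y) = ∑ i : Fin s, l (Fin.castLE hs i) := top_val hs Y W l hW1 hsp
  have hm1 : s - 1 < m := by omega
  have hky : ∀ C : Matrix (Fin m) (Fin s) ℝ, Cᵀ * C = 1 →
      froSq (Cᵀ * Y) + g * (s - froSq (Uᵀ * C)) ≤ froSq (Uᵀ * Y) := by
    intro C hC
    rw [hUv]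
    refine kyfan hs Y W l hW2 hsp g (l ⟨s - 1, hm1⟩ - g) ?_ ?_ C hC
    · intro j hj
      have : l ⟨s - 1, hm1⟩ ≤ l j := hanti (by rw [Fin.le_def]; simp; omega)
      linarith
    · intro j hj
      have hsm : s < m := lt_of_le_of_lt hj j.isLt
      have h1 := hgap hsm
      have h2 : lam Y s = l ⟨s, hsm⟩ := hl ⟨s, hsm⟩
      have h3 : lam Y (s - 1) = l ⟨s - 1, hm1⟩ := hl ⟨s - 1, hm1⟩
      have h4 : l j ≤ l ⟨s, hsm⟩ := hanti (by rw [Fin.le_def]; simpa using hj)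
      linarith
  obtain ⟨O, hO, hnear⟩ := nearest U C hU hC
  have hUO : (U * O)ᵀ * (U * O) = 1 := by
    rw [transpose_mul, Matrix.mul_assoc, ← Matrix.mul_assoc Uᵀ, hU, Matrix.one_mul, hO]
  have hUOv : froSq ((U * O)ᵀ * Y) = froSq (Uᵀ * Y) := by
    rw [transpose_mul, Matrix.mul_assoc, froSq_mul_left_orth O hO]
  have hgap0 : ∀ C : Matrix (Fin m) (Fin s) ℝ, Cᵀ * C = 1 → froSq (Cᵀ * Y) ≤ froSq (Uᵀ * Y) := by
    intro C hC
    have h1 := hky C hC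
    obtain ⟨O', -, h2⟩ := nearest U C hU hC
    have h3 := froSq_nonneg (U * O' - C)
    have : 0 ≤ g * (s - froSq (Uᵀ * C)) := mul_nonneg hg.le (by linarith)
    linarith
  have h1 := hgr (U * O) hUO (fun C' hC' => by rw [hUOv]; exact hgap0 C' hC')
  have h2 : froSq (B - C) ≤ froSq (U * O - C) := by
    unfold fro at h1
    exact (Real.sqrt_le_sqrt_iff (froSq_nonneg _)).mp h1
  have h3 := hky C hC
  have h4 := hmax U hU
  nlinarith

/-- entrywise perturbation bound -/
lemma froSq_perturb {m s : ℕ} {κ : Type*} [Fintype κ] (Y Y' : Matrix (Fin m) κ ℝ)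
    (C : Matrix (Fin m) (Fin s) ℝ) (hC : Cᵀ * C = 1) :
    froSq (Cᵀ * Y) - froSq (Cᵀ * Y') ≤ s * ∑ a, ∑ b, |(Y * Yᵀ - Y' * Y'ᵀ) a b| := by
  have hrep : ∀ Y : Matrix (Fin m) κ ℝ,
      froSq (Cᵀ * Y) = ∑ c, ∑ a, ∑ b, C a c * C b c * (Y * Yᵀ) a b := by
    intro Y
    rw [froSq_eq_trace, trace_mul_comm]
    have : Cᵀ * Y * (Cᵀ * Y)ᵀ = Cᵀ * ((Y * Yᵀ) * C) := by
      simp only [transpose_mul, transpose_transpose, Matrix.mul_assoc]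
    rw [this]
    generalize Y * Yᵀ = M
    simp only [trace, diag_apply]
    refine Finset.sum_congr rfl fun c _ => ?_
    rw [Matrix.mul_apply]
    refine Finset.sum_congr rfl fun a _ => ?_
    rw [Matrix.mul_apply, Finset.mul_sum]
    refine Finset.sum_congr rfl fun b _ => ?_
    simp only [transpose_apply]
    ring
  have hent : ∀ a c, |C a c| ≤ 1 := by
    intro a c
    have h1 := row_le_one C hC a
    have h2 : (C a c) ^ 2 ≤ ∑ c, (C a c) ^ 2 :=
      Finset.single_le_sum (f := fun c => (C a c) ^ 2) (fun k _ => sq_nonneg _) (Finset.mem_univ c)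
    exact (sq_le_one_iff_abs_le_one _).mp (h2.trans h1)
  rw [hrep Y, hrep Y', ← Finset.sum_sub_distrib]
  have : (s : ℝ) * ∑ a, ∑ b, |(Y * Yᵀ - Y' * Y'ᵀ) a b|
      = ∑ c : Fin s, ∑ a, ∑ b, |(Y * Yᵀ - Y' * Y'ᵀ) a b| := by simp
  rw [this]
  refine Finset.sum_le_sum fun c _ => ?_
  rw [← Finset.sum_sub_distrib]
  refine Finset.sum_le_sum fun a _ => ?_
  rw [← Finset.sum_sub_distrib]
  refine Finset.sum_le_sum fun b _ => ?_
  rw [← mul_sub, ← Matrix.sub_apply]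
  refine (le_abs_self _).trans ?_
  rw [abs_mul, abs_mul]
  have : |C a c| * |C b c| ≤ 1 := mul_le_one₀ (hent a c) (abs_nonneg _) (hent b c)
  exact mul_le_of_le_one_left (abs_nonneg _) this

lemma kyfan_sum {m : ℕ} {κ : Type*} [Fintype κ] (s : ℕ) (hs : s ≤ m) (Y : Matrix (Fin m) κ ℝ) :
    (∀ C : Matrix (Fin m) (Fin s) ℝ, Cᵀ * C = 1 →
      froSq (Cᵀ * Y) ≤ ∑ i ∈ Finset.range s, lam Y i) ∧
    ∃ U : Matrix (Fin m) (Fin s) ℝ, Uᵀ * U = 1 ∧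
      froSq (Uᵀ * Y) = ∑ i ∈ Finset.range s, lam Y i := by
  obtain ⟨W, l, hW1, hW2, hanti, hsp, hl⟩ := spectral_sorted Y
  have hsum : ∑ i ∈ Finset.range s, lam Y i = ∑ i : Fin s, l (Fin.castLE hs i) := by
    rw [Finset.sum_range]
    exact Finset.sum_congr rfl fun i _ => hl (Fin.castLE hs i)
  rw [hsum]
  constructor
  · intro C hC
    have hμ : ∃ μ : ℝ, (∀ j : Fin m, j.val < s → μ + 0 ≤ l j) ∧
        ∀ j : Fin m, s ≤ j.val → l j ≤ μ := by
      by_cases hsm : s < m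
      · refine ⟨l ⟨s, hsm⟩, fun j hj => ?_, fun j hj => ?_⟩
        · rw [add_zero]
          exact hanti (by rw [Fin.le_def]; exact hj.le)
        · exact hanti (by rw [Fin.le_def]; exact hj)
      · by_cases hm : 0 < m
        · refine ⟨l ⟨m - 1, by omega⟩, fun j hj => ?_, fun j hj => ?_⟩
          · rw [add_zero]
            exact hanti (by rw [Fin.le_def]; simp; omega)
          · exact absurd j.isLt (by omega)
        · exact ⟨0, fun j => absurd j.isLt (by omega), fun j => absurd j.isLt (by omega)⟩
    obtain ⟨μ, h1, h2⟩ := hμ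
    have := kyfan hs Y W l hW2 hsp 0 μ h1 h2 C hC
    linarith
  · exact ⟨_, top_orth hs W hW1, top_val hs Y W l hW1 hsp⟩

lemma tendsto_pert {m : ℕ} {κ : Type*} [Fintype κ] (Y : Matrix (Fin m) κ ℝ) (c : ℝ) :
    Tendsto (fun Z : Matrix (Fin m) κ ℝ => c * ∑ a, ∑ b, |(Z * Zᵀ - Y * Yᵀ) a b|)
      (nhds Y) (nhds 0) := by
  have hc : Continuous (fun Z : Matrix (Fin m) κ ℝ => c * ∑ a, ∑ b, |(Z * Zᵀ - Y * Yᵀ) a b|) := by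
    refine continuous_const.mul (continuous_finsetSum _ fun a _ =>
      continuous_finsetSum _ fun b _ => Continuous.abs ?_)
    have : Continuous (fun Z : Matrix (Fin m) κ ℝ => Z * Zᵀ - Y * Yᵀ) := by fun_prop
    exact this.matrix_elem a b
  simpa using hc.tendsto Y

lemma kysum_tendsto {m : ℕ} {κ : Type*} [Fintype κ] (s : ℕ) (hs : s ≤ m)
    (Y : Matrix (Fin m) κ ℝ) :
    Tendsto (fun Z : Matrix (Fin m) κ ℝ => ∑ i ∈ Finset.range s, lam Z i)
      (nhds Y) (nhds (∑ i ∈ Finset.range s, lam Y i)) := by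
  have hb : ∀ Z Z' : Matrix (Fin m) κ ℝ, ∑ i ∈ Finset.range s, lam Z i
      - ∑ i ∈ Finset.range s, lam Z' i ≤ s * ∑ a, ∑ b, |(Z * Zᵀ - Z' * Z'ᵀ) a b| := by
    intro Z Z'
    obtain ⟨U, hU, hUv⟩ := (kyfan_sum s hs Z).2
    have h1 := (kyfan_sum s hs Z').1 U hU
    have h2 := froSq_perturb Z Z' U hU
    linarith
  rw [tendsto_iff_norm_sub_tendsto_zero]
  refine squeeze_zero (fun _ => norm_nonneg _) (fun Z => ?_) (tendsto_pert Y s)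
  rw [Real.norm_eq_abs, abs_le]
  constructor
  · have := hb Y Z
    have h2 : ∑ a, ∑ b, |(Y * Yᵀ - Z * Zᵀ) a b| = ∑ a, ∑ b, |(Z * Zᵀ - Y * Yᵀ) a b| := by
      refine Finset.sum_congr rfl fun a _ => Finset.sum_congr rfl fun b _ => ?_
      rw [Matrix.sub_apply, Matrix.sub_apply, abs_sub_comm]
    rw [h2] at this
    linarith
  · exact hb Z Y

lemma lam_tendsto {m : ℕ} {κ : Type*} [Fintype κ] (i : ℕ) (hi : i < m)
    (Y : Matrix (Fin m) κ ℝ) :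
    Tendsto (fun Z : Matrix (Fin m) κ ℝ => lam Z i) (nhds Y) (nhds (lam Y i)) := by
  have h := (kysum_tendsto (i + 1) hi Y).sub (kysum_tendsto i hi.le Y)
  simpa [Finset.sum_range_succ] using h

/-- uniform constant near a matrix with a spectral gap -/
lemma gap_near {m s : ℕ} {κ : Type*} [Fintype κ] (Y : Matrix (Fin m) κ ℝ)
    (hnd : sval Y (s + 1) < sval Y s) :
    0 < s ∧ ∃ g > (0 : ℝ), ∀ᶠ Z in nhds Y, s < m → g ≤ lam Z (s - 1) - lam Z s := by
  have hs0 : 0 < s := by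
    rcases Nat.eq_zero_or_pos s with h | h
    · subst h
      simp [sval] at hnd
    · exact h
  refine ⟨hs0, ?_⟩
  have hlt : lam Y s < lam Y (s - 1) := by
    by_contra hcon
    push Not at hcon
    have := Real.sqrt_le_sqrt hcon
    unfold sval at hnd
    rw [Nat.add_sub_cancel] at hnd
    exact absurd hnd (not_lt.mpr this)
  by_cases hsm : s < m
  · refine ⟨(lam Y (s - 1) - lam Y s) / 2, by linarith, ?_⟩
    have h := (lam_tendsto (s - 1) (by omega) Y).sub (lam_tendsto s hsm Y)
    have := h.eventually (lt_mem_nhds (a := (lam Y (s - 1) - lam Y s) / 2) (by linarith))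
    filter_upwards [this] with Z hZ _
    exact hZ.le
  · exact ⟨1, one_pos, Eventually.of_forall fun Z h => absurd h hsm⟩

lemma sum_split {N : ℕ} (I : Fin N → ℕ) (n : Fin N) (F : ((n : Fin N) → Fin (I n)) → ℝ) :
    ∑ idx, F idx = ∑ j : Fin (I n), ∑ idx : ((m : {m : Fin N // m ≠ n}) → Fin (I m.1)),
      F (fun i => if h : i = n then Fin.cast (by rw [h]) j else idx ⟨i, h⟩) := by
  rw [← Equiv.sum_comp (Equiv.piSplitAt n (fun i => Fin (I i))).symm F, Fintype.sum_prod_type]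
  refine Finset.sum_congr rfl fun j _ => Finset.sum_congr rfl fun idx _ => ?_
  congr 1
  funext i
  by_cases h : i = n
  · subst h
    simp [Equiv.piSplitAt]
  · simp [Equiv.piSplitAt, h]

lemma fval_eq {N : ℕ} {I r : Fin N → ℕ} (X : ((n : Fin N) → Fin (I n)) → ℝ)
    (A : (n : Fin N) → Matrix (Fin (I n)) (Fin (r n)) ℝ) (n : Fin N) :
    fval X A = froSq ((A n)ᵀ * Gmat X A n) := by
  unfold fval froSq
  rw [sum_split r n]
  refine Finset.sum_congr rfl fun j _ => Finset.sum_congr rfl fun c _ => ?_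
  congr 1
  rw [sum_split I n, Matrix.mul_apply]
  refine Finset.sum_congr rfl fun a _ => ?_
  unfold Gmat
  rw [Finset.mul_sum]
  refine Finset.sum_congr rfl fun idx _ => ?_
  rw [Fintype.prod_eq_mul_prod_subtype_ne _ n]
  have h1 : ∏ i : {i : Fin N // i ≠ n}, A i.1
      (if h : i.1 = n then Fin.cast (by rw [h]) a else idx ⟨i.1, h⟩)
      (if h : i.1 = n then Fin.cast (by rw [h]) j else c ⟨i.1, h⟩)
      = ∏ m : {m : Fin N // m ≠ n}, A m.1 (idx m) (c m) := by
    refine Finset.prod_congr rfl fun i _ => ?_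
    simp [i.2]
  rw [h1]
  simp only [dite_true, Fin.cast_eq_self, transpose_apply]
  ring

lemma Gmat_congr {N : ℕ} {I r : Fin N → ℕ} (X : ((n : Fin N) → Fin (I n)) → ℝ)
    (A B : (n : Fin N) → Matrix (Fin (I n)) (Fin (r n)) ℝ) (n : Fin N)
    (h : ∀ m, m ≠ n → A m = B m) : Gmat X A n = Gmat X B n := by
  unfold Gmat
  funext j c
  refine Finset.sum_congr rfl fun idx _ => ?_
  congr 1
  refine Finset.prod_congr rfl fun m _ => ?_
  rw [h m.1 m.2]

lemma Gmat_continuous {N : ℕ} {I r : Fin N → ℕ} (X : ((n : Fin N) → Fin (I n)) → ℝ) (n : Fin N) :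
    Continuous (fun A : (n : Fin N) → Matrix (Fin (I n)) (Fin (r n)) ℝ => Gmat X A n) := by
  refine continuous_matrix fun j c => ?_
  unfold Gmat
  refine continuous_finsetSum _ fun idx _ => continuous_const.mul
    (continuous_finsetProd _ fun m _ => ?_)
  exact (continuous_apply m.1).matrix_elem _ _

lemma fval_continuous {N : ℕ} {I r : Fin N → ℕ} (X : ((n : Fin N) → Fin (I n)) → ℝ) :
    Continuous (fun A : (n : Fin N) → Matrix (Fin (I n)) (Fin (r n)) ℝ => fval X A) := by
  unfold fval
  refine continuous_finsetSum _ fun c _ => Continuous.pow (continuous_finsetSum _ fun idx _ =>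
    continuous_const.mul (continuous_finsetProd _ fun m _ => ?_)) 2
  exact (continuous_apply m).matrix_elem _ _

lemma froSq_continuous {ι κ : Type*} [Fintype ι] [Fintype κ] :
    Continuous (fun M : Matrix ι κ ℝ => froSq M) := by
  unfold froSq
  refine continuous_finsetSum _ fun a _ => continuous_finsetSum _ fun b _ => Continuous.pow ?_ 2
  exact continuous_id.matrix_elem a b

lemma tendsto_zero_of_froSq {ι κ β : Type*} [Fintype ι] [Fintype κ] {F : Filter β}
    {M : β → Matrix ι κ ℝ} (h : Tendsto (fun k => froSq (M k)) F (nhds 0)) :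
    Tendsto M F (nhds 0) := by
  refine tendsto_pi_nhds.mpr fun a => tendsto_pi_nhds.mpr fun b => ?_
  have h2 : Tendsto (fun k => Real.sqrt (froSq (M k))) F (nhds 0) := by
    have h3 := (Real.continuous_sqrt.tendsto 0).comp h
    rw [Real.sqrt_zero] at h3
    exact h3
  refine squeeze_zero_norm (fun k => ?_) h2
  rw [Real.norm_eq_abs]
  refine Real.abs_le_sqrt ?_
  unfold froSq
  calc (M k a b) ^ 2 ≤ ∑ j, (M k a j) ^ 2 :=
        Finset.single_le_sum (f := fun j => (M k a j) ^ 2) (fun _ _ => sq_nonneg _)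
          (Finset.mem_univ b)
    _ ≤ _ := Finset.single_le_sum (f := fun i => ∑ j, (M k i j) ^ 2)
          (fun _ _ => Finset.sum_nonneg fun _ _ => sq_nonneg _) (Finset.mem_univ a)

lemma tendsto_froSq_mul {m s : ℕ} {κ β : Type*} [Fintype κ] {F : Filter β}
    {P : β → Matrix (Fin m) (Fin s) ℝ} {Q : β → Matrix (Fin m) κ ℝ}
    {P0 : Matrix (Fin m) (Fin s) ℝ} {Q0 : Matrix (Fin m) κ ℝ}
    (hP : Tendsto P F (nhds P0)) (hQ : Tendsto Q F (nhds Q0)) :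
    Tendsto (fun k => froSq ((P k)ᵀ * Q k)) F (nhds (froSq (P0ᵀ * Q0))) := by
  have hP' : ∀ a c, Tendsto (fun k => P k a c) F (nhds (P0 a c)) := fun a c =>
    tendsto_pi_nhds.mp (tendsto_pi_nhds.mp hP a) c
  have hQ' : ∀ a c, Tendsto (fun k => Q k a c) F (nhds (Q0 a c)) := fun a c =>
    tendsto_pi_nhds.mp (tendsto_pi_nhds.mp hQ a) c
  simp only [froSq, Matrix.mul_apply, transpose_apply]
  exact tendsto_finsetSum _ fun i _ => tendsto_finsetSum _ fun j _ =>
    (tendsto_finsetSum _ fun a _ => (hP' a i).mul (hQ' a j)).pow 2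

/-- the progress of block `n` at step `k` -/
noncomputable def gain {N : ℕ} {I r : Fin N → ℕ} (X : ((n : Fin N) → Fin (I n)) → ℝ)
    (A : ℕ → (n : Fin N) → Matrix (Fin (I n)) (Fin (r n)) ℝ) (k : ℕ) (n : Fin N) : ℝ :=
  froSq ((A (k + 1) n)ᵀ * Gseq X A k n) - froSq ((A k n)ᵀ * Gseq X A k n)

lemma fval_telescope {N : ℕ} {I r : Fin N → ℕ} (X : ((n : Fin N) → Fin (I n)) → ℝ)
    (A : ℕ → (n : Fin N) → Matrix (Fin (I n)) (Fin (r n)) ℝ) (k : ℕ) :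
    fval X (A (k + 1)) - fval X (A k) = ∑ n, gain X A k n := by
  let H : ℕ → (i : Fin N) → Matrix (Fin (I i)) (Fin (r i)) ℝ :=
    fun j i => if i.val < j then A (k + 1) i else A k i
  have h0 : H 0 = A k := by funext i; simp [H]
  have hN : H N = A (k + 1) := by funext i; simp [H]
  have hstep : ∀ n : Fin N, gain X A k n = fval X (H (n.val + 1)) - fval X (H n.val) := by
    intro n
    rw [fval_eq X (H (n.val + 1)) n, fval_eq X (H n.val) n]
    have e1 : Gmat X (H (n.val + 1)) n = Gseq X A k n := by
      refine Gmat_congr X _ _ n fun m hm => ?_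
      have : m.val ≠ n.val := fun h => hm (Fin.ext h)
      have h2 : (m.val < n.val + 1) ↔ m < n := by rw [Fin.lt_def]; omega
      simp [H, hyb, h2]
    have e2 : Gmat X (H n.val) n = Gseq X A k n := by
      refine Gmat_congr X _ _ n fun m hm => ?_
      simp [H, hyb]
    rw [e1, e2]
    simp [gain, H]
  rw [← h0, ← hN, ← Finset.sum_range_sub (fun j => fval X (H j)) N, Finset.sum_range]
  exact Finset.sum_congr rfl fun n _ => (hstep n).symm

lemma gain_nonneg {N : ℕ} {I r : Fin N → ℕ} {X : ((n : Fin N) → Fin (I n)) → ℝ}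
    {A : ℕ → (n : Fin N) → Matrix (Fin (I n)) (Fin (r n)) ℝ} (hA : IsGreedyHOOI X A)
    (k : ℕ) (n : Fin N) : 0 ≤ gain X A k n :=
  sub_nonneg.mpr (hA.1.2 k n (A k n) (hA.1.1 k n))

lemma Gseq_tendsto {N : ℕ} {I r : Fin N → ℕ} (X : ((n : Fin N) → Fin (I n)) → ℝ)
    (A : ℕ → (n : Fin N) → Matrix (Fin (I n)) (Fin (r n)) ℝ)
    (Abar : (n : Fin N) → Matrix (Fin (I n)) (Fin (r n)) ℝ) (F : Filter ℕ)
    (hF : ∀ n, Tendsto (fun k => A k n) F (nhds (Abar n))) (n : Fin N)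
    (hn : ∀ m < n, Tendsto (fun k => A (k + 1) m) F (nhds (Abar m))) :
    Tendsto (fun k => Gseq X A k n) F (nhds (Gmat X Abar n)) := by
  have : Tendsto (fun k => hyb (A k) (A (k + 1)) n) F (nhds Abar) := by
    refine tendsto_pi_nhds.mpr fun m => ?_
    unfold hyb
    by_cases hm : m < n
    · simpa [hm] using hn m hm
    · simpa [hm] using hF m
  exact ((Gmat_continuous X n).tendsto Abar).comp this

/-- uniform one-block inequality along a filter -/
lemma block_eventually {N : ℕ} {I r : Fin N → ℕ} (hr : ∀ n, r n ≤ I n)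
    (X : ((n : Fin N) → Fin (I n)) → ℝ)
    (A : ℕ → (n : Fin N) → Matrix (Fin (I n)) (Fin (r n)) ℝ) (hA : IsGreedyHOOI X A)
    (Abar : (n : Fin N) → Matrix (Fin (I n)) (Fin (r n)) ℝ) (hnd : NonDeg X Abar) (n : Fin N) :
    ∃ α > (0 : ℝ), ∀ F : Filter ℕ, Tendsto (fun k => Gseq X A k n) F (nhds (Gmat X Abar n)) →
      ∀ᶠ k in F, α * froSq (A (k + 1) n - A k n) ≤ gain X A k n := by
  obtain ⟨hs0, g, hg, hev⟩ := gap_near (Gmat X Abar n) (hnd n)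
  refine ⟨g / 2, by linarith, fun F hF => ?_⟩
  filter_upwards [hF.eventually hev] with k hk
  exact block_step (hr n) hs0 _ g hg hk _ _ (hA.1.1 k n) (hA.1.2 k n) (hA.2 k n)

lemma next_tendsto {N : ℕ} {I r : Fin N → ℕ} (hr : ∀ n, r n ≤ I n)
    (X : ((n : Fin N) → Fin (I n)) → ℝ)
    (A : ℕ → (n : Fin N) → Matrix (Fin (I n)) (Fin (r n)) ℝ) (hA : IsGreedyHOOI X A)
    (Abar : (n : Fin N) → Matrix (Fin (I n)) (Fin (r n)) ℝ) (hnd : NonDeg X Abar) (n : Fin N)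
    (F : Filter ℕ) (hF : Tendsto (fun k => A k n) F (nhds (Abar n)))
    (hG : Tendsto (fun k => Gseq X A k n) F (nhds (Gmat X Abar n)))
    (hgain : Tendsto (fun k => gain X A k n) F (nhds 0)) :
    Tendsto (fun k => A (k + 1) n) F (nhds (Abar n)) := by
  obtain ⟨α, hα, h⟩ := block_eventually hr X A hA Abar hnd n
  have h1 := h F hG
  have h2 : Tendsto (fun k => froSq (A (k + 1) n - A k n)) F (nhds 0) := by
    have h3 : Tendsto (fun k => gain X A k n / α) F (nhds 0) := by simpa using hgain.div_const α
    refine squeeze_zero' (Eventually.of_forall fun _ => froSq_nonneg _) ?_ h3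
    filter_upwards [h1] with k hk
    rw [le_div_iff₀ hα]
    linarith
  have h4 := (tendsto_zero_of_froSq h2).add hF
  simpa using h4

/-- a nondegenerate limit point is a block maximizer -/
lemma limit_blockMax {N : ℕ} {I r : Fin N → ℕ} (hr : ∀ n, r n ≤ I n)
    (X : ((n : Fin N) → Fin (I n)) → ℝ)
    (A : ℕ → (n : Fin N) → Matrix (Fin (I n)) (Fin (r n)) ℝ) (hA : IsGreedyHOOI X A)
    (Abar : (n : Fin N) → Matrix (Fin (I n)) (Fin (r n)) ℝ) (hlim : IsLimitPt A Abar)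
    (hnd : NonDeg X Abar) : BlockMax X Abar := by
  obtain ⟨φ, hφ, hconv⟩ := hlim
  have hAφ : ∀ n, Tendsto (fun k => A (φ k) n) atTop (nhds (Abar n)) := by
    intro n
    have h1 : Tendsto (fun k => froSq (A (φ k) n - Abar n)) atTop (nhds 0) := by
      have := (hconv n).pow 2
      simp only [fro, Real.sq_sqrt (froSq_nonneg _)] at this
      simpa using this
    simpa using (tendsto_zero_of_froSq h1).add_const (Abar n)
  set F : Filter ℕ := map φ atTop with hFdef
  have hF : ∀ n, Tendsto (fun k => A k n) F (nhds (Abar n)) := fun n => tendsto_map'_iff.mpr (hAφ n)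
  have hmono : Monotone (fun k => fval X (A k)) := by
    refine monotone_nat_of_le_succ fun k => ?_
    have h1 := fval_telescope X A k
    have h2 : 0 ≤ ∑ n, gain X A k n := Finset.sum_nonneg fun n _ => gain_nonneg hA k n
    linarith
  have hfφ : Tendsto (fun k => fval X (A (φ k))) atTop (nhds (fval X Abar)) :=
    ((fval_continuous X).tendsto Abar).comp (tendsto_pi_nhds.mpr hAφ)
  have hdiff : Tendsto (fun k => fval X (A (φ (k + 1))) - fval X (A (φ k))) atTop (nhds 0) := by
    simpa using (hfφ.comp (tendsto_add_atTop_nat 1)).sub hfφ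
  have hgain : ∀ n, Tendsto (fun k => gain X A k n) F (nhds 0) := by
    intro n
    refine tendsto_map'_iff.mpr ?_
    refine squeeze_zero (fun k => gain_nonneg hA _ n) (fun k => ?_) hdiff
    have h1 := fval_telescope X A (φ k)
    have h2 : gain X A (φ k) n ≤ ∑ n, gain X A (φ k) n :=
      Finset.single_le_sum (fun n _ => gain_nonneg hA (φ k) n) (Finset.mem_univ n)
    have h3 : fval X (A (φ k + 1)) ≤ fval X (A (φ (k + 1))) := hmono (hφ (Nat.lt_succ_self k))
    simp only [Function.comp]
    linarith
  have hnext : ∀ n, Tendsto (fun k => A (k + 1) n) F (nhds (Abar n)) := by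
    intro n
    induction n using WellFoundedLT.induction with
    | ind n ih =>
      exact next_tendsto hr X A hA Abar hnd n F (hF n) (Gseq_tendsto X A Abar F hF n ih) (hgain n)
  intro n B hB
  have hG := Gseq_tendsto X A Abar F hF n (fun m _ => hnext m)
  have hl := tendsto_froSq_mul (tendsto_const_nhds (x := B) (f := F)) hG
  have hR := tendsto_froSq_mul (hnext n) hG
  exact le_of_tendsto_of_tendsto' hl hR fun k => hA.1.2 k n B hB

lemma gain_tendsto {N : ℕ} {I r : Fin N → ℕ}
    (X : ((n : Fin N) → Fin (I n)) → ℝ)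
    (A : ℕ → (n : Fin N) → Matrix (Fin (I n)) (Fin (r n)) ℝ) (hA : IsGreedyHOOI X A)
    (Abar : (n : Fin N) → Matrix (Fin (I n)) (Fin (r n)) ℝ) (hbm : BlockMax X Abar) (n : Fin N)
    (F : Filter ℕ) (hF : Tendsto (fun k => A k n) F (nhds (Abar n)))
    (hG : Tendsto (fun k => Gseq X A k n) F (nhds (Gmat X Abar n))) :
    Tendsto (fun k => gain X A k n) F (nhds 0) := by
  have h1 := (tendsto_pert (Gmat X Abar n) (r n)).comp hG
  have hR := tendsto_froSq_mul hF hG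
  have h2 := h1.add (hR.const_sub (froSq ((Abar n)ᵀ * Gmat X Abar n)))
  rw [sub_self, add_zero] at h2
  refine squeeze_zero (fun k => gain_nonneg hA k n) (fun k => ?_) h2
  have h3 := froSq_perturb (Gseq X A k n) (Gmat X Abar n) (A (k + 1) n) (hA.1.1 (k + 1) n)
  have h4 := hbm n (A (k + 1) n) (hA.1.1 (k + 1) n)
  simp only [gain, Function.comp]
  linarith

/-- Near a block-nondegenerate limit point of a greedy HOOI
sequence, the squared step length is bounded by the objective progress. -/
theorem stmt11 {N : ℕ} {I r : Fin N → ℕ} (hr : ∀ n, r n ≤ I n)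
    (X : ((n : Fin N) → Fin (I n)) → ℝ)
    (A : ℕ → (n : Fin N) → Matrix (Fin (I n)) (Fin (r n)) ℝ)
    (hA : IsGreedyHOOI X A)
    (Abar : (n : Fin N) → Matrix (Fin (I n)) (Fin (r n)) ℝ)
    (hfeas : TFeas Abar) (hlim : IsLimitPt A Abar) (hnd : NonDeg X Abar) :
    ∃ α > (0 : ℝ), ∃ δ > (0 : ℝ), ∀ k : ℕ, tdist (A k) Abar ≤ δ →
      α * (∑ n, froSq (A (k + 1) n - A k n)) ≤ fval X (A (k + 1)) - fval X (A k) := by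
  have hbm := limit_blockMax hr X A hA Abar hlim hnd
  set F : Filter ℕ := comap (fun k => tdist (A k) Abar) (nhds 0) with hFdef
  have hT : Tendsto (fun k => tdist (A k) Abar) F (nhds 0) := tendsto_comap
  have hF : ∀ n, Tendsto (fun k => A k n) F (nhds (Abar n)) := by
    intro n
    have h0 : Tendsto (fun k => (tdist (A k) Abar) ^ 2) F (nhds 0) := by simpa using hT.pow 2
    have h1 : Tendsto (fun k => froSq (A k n - Abar n)) F (nhds 0) := by
      refine squeeze_zero (fun k => froSq_nonneg _) (fun k => ?_) h0
      unfold tdist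
      rw [Real.sq_sqrt (Finset.sum_nonneg fun n _ => froSq_nonneg _)]
      exact Finset.single_le_sum (f := fun n => froSq (A k n - Abar n))
        (fun n _ => froSq_nonneg _) (Finset.mem_univ n)
    simpa using (tendsto_zero_of_froSq h1).add_const (Abar n)
  have hnext : ∀ n, Tendsto (fun k => A (k + 1) n) F (nhds (Abar n)) := by
    intro n
    induction n using WellFoundedLT.induction with
    | ind n ih =>
      have hG := Gseq_tendsto X A Abar F hF n ih
      exact next_tendsto hr X A hA Abar hnd n F (hF n) hG
        (gain_tendsto X A hA Abar hbm n F (hF n) hG)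
  choose α hα hblock using fun n => block_eventually hr X A hA Abar hnd n
  have hall : ∀ᶠ k in F, ∀ n, α n * froSq (A (k + 1) n - A k n) ≤ gain X A k n :=
    eventually_all.mpr fun n => hblock n F (Gseq_tendsto X A Abar F hF n (fun m _ => hnext m))
  obtain ⟨β, hβ, hβle⟩ : ∃ β > (0 : ℝ), ∀ n, β ≤ α n := by
    rcases isEmpty_or_nonempty (Fin N) with h | h
    · exact ⟨1, one_pos, fun n => h.elim n⟩
    · obtain ⟨n0, hn0⟩ := Finite.exists_min α
      exact ⟨α n0, hα n0, hn0⟩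
  rw [hFdef, eventually_comap, Metric.eventually_nhds_iff] at hall
  obtain ⟨ε, hε, hall⟩ := hall
  refine ⟨β, hβ, ε / 2, by linarith, fun k hk => ?_⟩
  have h1 := hall (y := tdist (A k) Abar) (by
    have : 0 ≤ tdist (A k) Abar := Real.sqrt_nonneg _
    rw [Real.dist_eq, sub_zero, abs_of_nonneg this]
    linarith) k rfl
  rw [fval_telescope, Finset.mul_sum]
  refine Finset.sum_le_sum fun n _ => ?_
  exact (mul_le_mul_of_nonneg_right (hβle n) (froSq_nonneg _)).trans (h1 n)
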